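/- Deterministic GreeDI guarantee: let OPT be any set of k elements distributed among machines with O_j the optimal elements on machine j (r_j = |O_j|, Σ_j r_j = k), and let E_j be the k-element greedy solution on machine j with E = ∪_j E_j. If Õ ⊆ E is a k-element subset of E maximizing f, then f(OPT) ≤ 2√k · f(Õ), for any monotone submodular f. -/

import Mathlib

open MeasureTheory Finset

/-- A set function is submodular. -/
def Submodular {V : Type*} [DecidableEq V] (f : Finset V → ℝ) : Prop :=
  ∀ A B : Finset V, f (A ∪ B) + f (A ∩ B) ≤ f A + f B

/-- The Lovász extension: expectation over a uniform threshold θ ∈ (0,1). -/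
noncomputable def lovasz {V : Type*} [Fintype V] [DecidableEq V]
    (f : Finset V → ℝ) (x : V → ℝ) : ℝ :=
  ∫ θ in Set.Ioo (0:ℝ) 1, f (Finset.univ.filter (fun i => θ ≤ x i))

/-- Characteristic vector of a finite set. -/
def charVec {V : Type*} [DecidableEq V] (S : Finset V) : V → ℝ :=
  fun i => if i ∈ S then 1 else 0
/-- One pass of the standard greedy algorithm with fuel `n`: at each step add the
feasible element of `X` with maximum nonnegative marginal gain, breaking ties by
the fixed linear order on `V` (choosing the least maximizer). -/
noncomputable def greedyAux {V : Type*} [Fintype V] [DecidableEq V] [LinearOrder V]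
    (f : Finset V → ℝ) (I : Finset V → Prop) [DecidablePred I]
    (X : Finset V) : ℕ → Finset V → Finset V
  | 0, S => S
  | (n+1), S =>
    let C := (X \ S).filter (fun e => I (insert e S) ∧ 0 ≤ f (insert e S) - f S)
    let M := C.filter (fun e => ∀ e' ∈ C, f (insert e' S) - f S ≤ f (insert e S) - f S)
    if h : M.Nonempty then greedyAux f I X n (insert (M.min' h) S) else S

/-- The standard greedy algorithm on ground set `X`. -/
noncomputable def greedy {V : Type*} [Fintype V] [DecidableEq V] [LinearOrder V]
    (f : Finset V → ℝ) (I : Finset V → Prop) [DecidablePred I]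
    (X : Finset V) : Finset V :=
  greedyAux f I X (Fintype.card V) ∅

/-- One greedy step. -/
noncomputable def gStep {V : Type*} [Fintype V] [DecidableEq V] [LinearOrder V]
    (f : Finset V → ℝ) (I : Finset V → Prop) [DecidablePred I]
    (X : Finset V) (S : Finset V) : Finset V :=
  let C := (X \ S).filter (fun e => I (insert e S) ∧ 0 ≤ f (insert e S) - f S)
  let M := C.filter (fun e => ∀ e' ∈ C, f (insert e' S) - f S ≤ f (insert e S) - f S)
  if h : M.Nonempty then insert (M.min' h) S else S

theorem gAux_eq {V : Type*} [Fintype V] [DecidableEq V] [LinearOrder V]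
    (f : Finset V → ℝ) (I : Finset V → Prop) [DecidablePred I]
    (X : Finset V) (n : ℕ) : ∀ S : Finset V, greedyAux f I X n S = (gStep f I X)^[n] S := by
  induction n with
  | zero => intro S; simp [greedyAux]
  | succ n ih =>
    intro S
    rw [Function.iterate_succ_apply]
    unfold greedyAux
    dsimp only
    split_ifs with h
    · rw [ih]
      congr 1
      unfold gStep
      dsimp only
      rw [dif_pos h]
    · have hs : gStep f I X S = S := by
        unfold gStep
        dsimp only
        rw [dif_neg h]
      rw [hs, Function.iterate_fixed hs]

theorem gStep_sub {V : Type*} [Fintype V] [DecidableEq V] [LinearOrder V]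
    (f : Finset V → ℝ) (I : Finset V → Prop) [DecidablePred I]
    (X : Finset V) (S : Finset V) : S ⊆ gStep f I X S := by
  unfold gStep
  dsimp only
  split_ifs with h
  · exact Finset.subset_insert _ _
  · exact Finset.Subset.refl _

theorem gStep_sdiff {V : Type*} [Fintype V] [DecidableEq V] [LinearOrder V]
    (f : Finset V → ℝ) (I : Finset V → Prop) [DecidablePred I]
    (X : Finset V) (S : Finset V) : (gStep f I X S \ S).card ≤ 1 := by
  unfold gStep
  dsimp only
  split_ifs with h
  · refine (Finset.card_le_card (t := {Finset.min' _ h}) ?_).trans (by simp)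
    intro x hx
    rw [Finset.mem_sdiff, Finset.mem_insert] at hx
    exact Finset.mem_singleton.2 (hx.1.resolve_right hx.2)
  · simp

theorem gStep_best {V : Type*} [Fintype V] [DecidableEq V] [LinearOrder V]
    (f : Finset V → ℝ) (hmono : ∀ A B : Finset V, A ⊆ B → f A ≤ f B)
    (I : Finset V → Prop) [DecidablePred I]
    (X : Finset V) (S : Finset V) (hI : ∀ e, I (insert e S)) (o : V) (ho : o ∈ X) :
    f (insert o S) ≤ f (gStep f I X S) := by
  by_cases hoS : o ∈ S
  · rw [Finset.insert_eq_of_mem hoS]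
    exact hmono _ _ (gStep_sub f I X S)
  set C := (X \ S).filter (fun e => I (insert e S) ∧ 0 ≤ f (insert e S) - f S) with hC
  set M := C.filter (fun e => ∀ e' ∈ C, f (insert e' S) - f S ≤ f (insert e S) - f S) with hM
  have hoC : o ∈ C := by
    rw [hC, Finset.mem_filter]
    exact ⟨by simp [ho, hoS], hI o, sub_nonneg.2 (hmono _ _ (Finset.subset_insert _ _))⟩
  obtain ⟨m, hm, hmax⟩ := Finset.exists_max_image C (fun e => f (insert e S) - f S) ⟨o, hoC⟩
  have hne : M.Nonempty := ⟨m, by rw [hM, Finset.mem_filter]; exact ⟨hm, hmax⟩⟩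
  have heq : gStep f I X S = insert (M.min' hne) S := by
    unfold gStep
    dsimp only
    rw [dif_pos hne]
  rw [heq]
  have := Finset.min'_mem M hne
  have h2 := (Finset.mem_filter.1 this).2 o hoC
  linarith

theorem marg_anti {V : Type*} [DecidableEq V]
    (f : Finset V → ℝ) (hsub : Submodular f)
    (hmono : ∀ A B : Finset V, A ⊆ B → f A ≤ f B)
    (A B : Finset V) (h : A ⊆ B) (o : V) :
    f (insert o B) - f B ≤ f (insert o A) - f A := by
  have h1 := hsub (insert o A) B
  have h2 : insert o A ∪ B = insert o B := by
    rw [Finset.insert_union, Finset.union_eq_right.2 h]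
  have h3 : f A ≤ f (insert o A ∩ B) :=
    hmono _ _ (Finset.subset_inter (Finset.subset_insert _ _) h)
  rw [h2] at h1
  linarith

theorem sum_marg {V : Type*} [DecidableEq V]
    (f : Finset V → ℝ) (hsub : Submodular f)
    (hmono : ∀ A B : Finset V, A ⊆ B → f A ≤ f B)
    (T : Finset V) (c : ℝ) (P : Finset V) :
    (∀ o ∈ P, f (insert o T) - f T ≤ c) → f (T ∪ P) ≤ f T + P.card * c := by
  induction P using Finset.induction_on with
  | empty => simp
  | insert a P ha ih =>
    intro h
    have h1 := ih (fun o ho => h o (Finset.mem_insert_of_mem ho))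
    have h2 := h a (Finset.mem_insert_self _ _)
    have h3 := marg_anti f hsub hmono T (T ∪ P) Finset.subset_union_left a
    rw [Finset.union_insert, Finset.card_insert_of_notMem ha]
    push_cast
    linarith

/-- Theorem 8: the deterministic GreeDI guarantee, `f(OPT) ≤ 2√k · f(Õ)`. -/
theorem det_greedi_guarantee {V : Type*} [Fintype V] [DecidableEq V] [LinearOrder V]
    (f : Finset V → ℝ) (hsub : Submodular f)
    (hmono : ∀ A B : Finset V, A ⊆ B → f A ≤ f B) (hnn : ∀ A : Finset V, 0 ≤ f A)
    (k : ℕ) (hk : 0 < k) (t : ℕ)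
    (N O : Fin t → Finset V) (hNO : ∀ j, O j ⊆ N j)
    (hdisj : ∀ j j' : Fin t, j ≠ j' → Disjoint (O j) (O j'))
    (OPT : Finset V) (hOPT : OPT = Finset.univ.biUnion O) (hcard : OPT.card = k)
    (Otil : Finset V)
    (hOtil : Otil ⊆
      Finset.univ.biUnion (fun j : Fin t => greedy f (fun s : Finset V => s.card ≤ k) (N j)))
    (hOtilcard : Otil.card ≤ k)
    (hOtilmax : ∀ A : Finset V,
      A ⊆ Finset.univ.biUnion
            (fun j : Fin t => greedy f (fun s : Finset V => s.card ≤ k) (N j)) →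
      A.card ≤ k → f A ≤ f Otil) :
    f OPT ≤ 2 * Real.sqrt k * f Otil := by
  have hOj : ∀ o : V, ∃ j : Fin t, o ∈ OPT → o ∈ O j := by
    intro o
    by_cases ho : o ∈ OPT
    · have ho' := ho
      rw [hOPT, Finset.mem_biUnion] at ho'
      obtain ⟨j, -, hj⟩ := ho'
      exact ⟨j, fun _ => hj⟩
    · have hne : OPT.Nonempty := Finset.card_pos.1 (hcard ▸ hk)
      obtain ⟨o', ho'⟩ := hne
      rw [hOPT, Finset.mem_biUnion] at ho'
      obtain ⟨j, -, hj⟩ := ho'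
      exact ⟨j, fun h => absurd h ho⟩
  choose J hJ using hOj
  set G := Finset.univ.biUnion
    (fun j : Fin t => greedy f (fun s : Finset V => s.card ≤ k) (N j)) with hG
  obtain ⟨E, hE⟩ : ∃ E : Fin t → ℕ → Finset V, E = fun j i =>
    (gStep f (fun s : Finset V => s.card ≤ k) (N j))^[i] ∅ := ⟨_, rfl⟩
  have hE0 : ∀ j, E j 0 = ∅ := by intro j; rw [hE]; rfl
  have hEs : ∀ j i, E j (i+1) = gStep f (fun s : Finset V => s.card ≤ k) (N j) (E j i) := by
    intro j i; rw [hE]; exact Function.iterate_succ_apply' _ _ _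
  have hEmono : ∀ j, Monotone (E j) := by
    intro j
    refine monotone_nat_of_le_succ (fun i => ?_)
    rw [hEs]
    exact gStep_sub _ _ _ _
  have hEd : ∀ j i, (E j (i+1) \ E j i).card ≤ 1 := by
    intro j i; rw [hEs]; exact gStep_sdiff _ _ _ _
  have hEc : ∀ j i, (E j i).card ≤ i := by
    intro j i
    induction i with
    | zero => rw [hE0]; simp
    | succ i ih =>
      have h1 := Finset.card_sdiff_add_card_eq_card (hEmono j (Nat.le_succ i))
      have h2 := hEd j i
      simp only [Nat.succ_eq_add_one] at h1
      omega
  have hkV : k ≤ Fintype.card V := hcard ▸ Finset.card_le_univ OPT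
  have hEG : ∀ j i, i ≤ k → E j i ⊆ G := by
    intro j i hi
    have h1 : E j i ⊆ E j (Fintype.card V) := hEmono j (hi.trans hkV)
    have h2 : E j (Fintype.card V) = greedy f (fun s : Finset V => s.card ≤ k) (N j) := by
      unfold greedy
      rw [gAux_eq, hE]
    rw [h2] at h1
    exact h1.trans (Finset.subset_biUnion_of_mem
      (fun j : Fin t => greedy f (fun s : Finset V => s.card ≤ k) (N j)) (Finset.mem_univ j))
  have hEF : ∀ j i, i ≤ k → f (E j i) ≤ f Otil := fun j i hi =>
    hOtilmax _ (hEG j i hi) ((hEc j i).trans hi)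
  have hgreed : ∀ j i o, i < k → o ∈ N j → f (insert o (E j i)) ≤ f (E j (i+1)) := by
    intro j i o hi ho
    rw [hEs]
    refine gStep_best f hmono _ _ _ (fun e => ?_) o ho
    exact (Finset.card_insert_le _ _).trans (Nat.succ_le_of_lt ((hEc j i).trans_lt hi))
  have hgain : ∀ j n o, n < k → o ∈ N j →
      ((n:ℝ)+1) * (f (insert o (E j n)) - f (E j n)) ≤ f Otil := by
    intro j n o hn ho
    have key : ∀ i, i ≤ n + 1 →
        (i:ℝ) * (f (insert o (E j n)) - f (E j n)) ≤ f (E j i) - f (E j 0) := by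
      intro i
      induction i with
      | zero => simp
      | succ i ih =>
        intro hi
        have h1 := ih (by omega)
        have h2 := marg_anti f hsub hmono (E j i) (E j n) (hEmono j (by omega)) o
        have h3 := hgreed j i o (by omega) ho
        push_cast
        linarith
    have h1 := key (n+1) le_rfl
    have h2 := hEF j (n+1) hn
    have h3 := hnn (E j 0)
    push_cast at h1
    linarith
  obtain ⟨T, hT⟩ : ∃ T : ℕ → Finset V, T = fun i => OPT.biUnion (fun o => E (J o) i) := ⟨_, rfl⟩
  have hF0 : f ∅ ≤ f Otil := hmono _ _ (Finset.empty_subset _)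
  have hTb : ∀ i, i ≤ k → f (T i) - f ∅ ≤ i * (f Otil - f ∅) := by
    intro i
    induction i with
    | zero =>
      intro _
      have : T 0 = ∅ := by
        rw [hT]; ext x; simp [hE0]
      simp [this]
    | succ i ih =>
      intro hi
      have h1 := ih (by omega)
      set P := OPT.biUnion (fun o => E (J o) (i+1) \ E (J o) i) with hP
      have hPk : P.card ≤ k := by
        have := Finset.card_biUnion_le_card_mul OPT
          (fun o => E (J o) (i+1) \ E (J o) i) 1 (fun o _ => hEd _ _)
        rw [hP]; omega
      have hPG : P ⊆ G := by
        rw [hP, Finset.biUnion_subset]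
        intro o _
        exact Finset.sdiff_subset.trans (hEG _ _ hi)
      have h2 := hOtilmax P hPG hPk
      have h3 : T (i+1) ⊆ T i ∪ P := by
        rw [hT]
        intro x hx
        simp only [Finset.mem_biUnion] at hx
        obtain ⟨o, ho, hx⟩ := hx
        rw [Finset.mem_union]
        by_cases hxi : x ∈ E (J o) i
        · exact Or.inl (Finset.mem_biUnion.2 ⟨o, ho, hxi⟩)
        · exact Or.inr (Finset.mem_biUnion.2 ⟨o, ho, Finset.mem_sdiff.2 ⟨hx, hxi⟩⟩)
      have h4 := hmono _ _ h3
      have h5 := hsub (T i) P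
      have h6 := hmono ∅ (T i ∩ P) (Finset.empty_subset _)
      push_cast
      linarith
  obtain ⟨n, hn⟩ : ∃ n, n = Nat.sqrt (k-1) := ⟨_, rfl⟩
  have hnk : n < k := by have := Nat.sqrt_le_self (k-1); omega
  have hlow : n * n ≤ k := by have := Nat.sqrt_le (k-1); rw [← hn] at this; omega
  have hup : k ≤ (n+1) * (n+1) := by
    have := Nat.lt_succ_sqrt (k-1); rw [← hn] at this
    simp only [Nat.succ_eq_add_one] at this; omega
  have hsq : Real.sqrt k * Real.sqrt k = k := Real.mul_self_sqrt (Nat.cast_nonneg k)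
  have hs1 : (1:ℝ) ≤ Real.sqrt k := Real.one_le_sqrt.2 (by exact_mod_cast hk)
  have hsn : (n:ℝ) ≤ Real.sqrt k := Real.le_sqrt_of_sq_le (by rw [sq]; exact_mod_cast hlow)
  have hsn1 : Real.sqrt k ≤ (n:ℝ)+1 := by
    refine Real.sqrt_le_iff.2 ⟨by positivity, ?_⟩
    rw [sq]; exact_mod_cast hup
  have hF := hnn Otil
  have hfin := sum_marg f hsub hmono (T n) (f Otil / (n+1)) OPT (by
    intro o ho
    have hsubT : E (J o) n ⊆ T n := by
      rw [hT]; exact Finset.subset_biUnion_of_mem (fun o => E (J o) n) ho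
    have h1 := marg_anti f hsub hmono _ _ hsubT o
    have h2 := hgain (J o) n o hnk (hNO _ (hJ o ho))
    rw [le_div_iff₀ (by positivity)]
    have h3 : (0:ℝ) ≤ (n:ℝ) + 1 := by positivity
    nlinarith)
  rw [hcard] at hfin
  have hO := hmono OPT (T n ∪ OPT) Finset.subset_union_right
  have hTn : f (T n) ≤ Real.sqrt k * f Otil := by
    have h1 := hTb n hnk.le
    have h2 := hnn ∅
    nlinarith [mul_le_mul_of_nonneg_right hsn (sub_nonneg.2 hF0),
      mul_le_mul_of_nonneg_right hs1 h2]
  have hlast : (k:ℝ) * (f Otil / (n+1)) ≤ Real.sqrt k * f Otil := by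
    rw [← mul_div_assoc, div_le_iff₀ (by positivity)]
    have h1 : (k:ℝ) ≤ Real.sqrt k * (n+1) := by
      have h0 := mul_le_mul_of_nonneg_left hsn1 (Real.sqrt_nonneg (k:ℝ))
      linarith
    nlinarith [mul_le_mul_of_nonneg_right h1 hF]
  linarith
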